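/- Let r1 ≥ 1 and r2 ≥ 0 be integers and let R := ℝ^{r1} × ℂ^{r2}, viewed as a finite-dimensional commutative ℝ-algebra (componentwise operations), with N : R → ℝ the ℝ-algebra norm. Let P be the subgroup of R^× consisting of units u with N(u) > 0, and let Q := {u² : u ∈ R^×} be the subgroup of squares of units (note Q ⊆ P). Then the quotient group P/Q has exactly 2^{r1−1} elements. -/

import Mathlib

/-- The ℝ-algebra `ℝ^(r1) × ℂ^(r2)` (componentwise operations). -/
abbrev RCAlg (r1 r2 : ℕ) : Type := (Fin r1 → ℝ) × (Fin r2 → ℂ)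

/-- The subgroup `P` of units of `ℝ^(r1) × ℂ^(r2)` of positive algebra norm. -/
noncomputable def posNormUnits (r1 r2 : ℕ) : Subgroup (RCAlg r1 r2)ˣ where
  carrier := {u | 0 < Algebra.norm ℝ (u : RCAlg r1 r2)}
  one_mem' := by
    simp only [Set.mem_setOf_eq, Units.val_one, _root_.map_one]
    exact one_pos
  mul_mem' := by
    intro a b ha hb
    simp only [Set.mem_setOf_eq, Units.val_mul, _root_.map_mul] at *
    exact mul_pos ha hb
  inv_mem' := by
    intro a ha
    simp only [Set.mem_setOf_eq] at *
    have h1 : Algebra.norm ℝ ((a : (RCAlg r1 r2)ˣ) : RCAlg r1 r2) *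
        Algebra.norm ℝ ((a⁻¹ : (RCAlg r1 r2)ˣ) : RCAlg r1 r2) = 1 := by
      rw [← _root_.map_mul, ← Units.val_mul, mul_inv_cancel, Units.val_one, _root_.map_one]
    have h2 : Algebra.norm ℝ ((a⁻¹ : (RCAlg r1 r2)ˣ) : RCAlg r1 r2) =
        (Algebra.norm ℝ ((a : (RCAlg r1 r2)ˣ) : RCAlg r1 r2))⁻¹ :=
      eq_inv_of_mul_eq_one_right h1
    rw [h2]
    exact inv_pos.mpr ha

theorem RCAlg.norm_eq (r1 r2 : ℕ) (x : RCAlg r1 r2) :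
    Algebra.norm ℝ x = (∏ i, x.1 i) * ∏ j, Complex.normSq (x.2 j) := by
  have h : LinearMap.mul ℝ (RCAlg r1 r2) x =
      LinearMap.prodMap
        (LinearMap.pi fun i => (LinearMap.mul ℝ ℝ (x.1 i)).comp (LinearMap.proj i))
        (LinearMap.pi fun i => (LinearMap.mul ℝ ℂ (x.2 i)).comp (LinearMap.proj i)) := by
    apply LinearMap.ext
    intro y
    rfl
  have h1 : Algebra.norm ℝ x = LinearMap.det (LinearMap.mul ℝ (RCAlg r1 r2) x) := rfl
  rw [h1, h, LinearMap.det_prodMap, LinearMap.det_pi, LinearMap.det_pi]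
  congr 1
  · refine Finset.prod_congr rfl fun i _ => ?_
    have : LinearMap.det (LinearMap.mul ℝ ℝ (x.1 i)) = Algebra.norm ℝ (x.1 i) := rfl
    rw [this, Algebra.norm_self]
    rfl
  · refine Finset.prod_congr rfl fun i _ => ?_
    have : LinearMap.det (LinearMap.mul ℝ ℂ (x.2 i)) = Algebra.norm ℝ (x.2 i) := rfl
    rw [this, Algebra.norm_complex_apply]

theorem RCAlg.fst_ne (r1 r2 : ℕ) (u : (RCAlg r1 r2)ˣ) (i : Fin r1) :
    (u : RCAlg r1 r2).1 i ≠ 0 := by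
  intro h
  have h2 : (u : RCAlg r1 r2).1 i * ((u⁻¹ : (RCAlg r1 r2)ˣ) : RCAlg r1 r2).1 i = (1 : ℝ) :=
    congrArg (fun z : RCAlg r1 r2 => z.1 i) u.mul_inv
  rw [h, zero_mul] at h2
  exact zero_ne_one h2

theorem RCAlg.snd_ne (r1 r2 : ℕ) (u : (RCAlg r1 r2)ˣ) (i : Fin r2) :
    (u : RCAlg r1 r2).2 i ≠ 0 := by
  intro h
  have h2 : (u : RCAlg r1 r2).2 i * ((u⁻¹ : (RCAlg r1 r2)ˣ) : RCAlg r1 r2).2 i = (1 : ℂ) :=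
    congrArg (fun z : RCAlg r1 r2 => z.2 i) u.mul_inv
  rw [h, zero_mul] at h2
  exact zero_ne_one h2

theorem RCAlg.norm_pos_iff (r1 r2 : ℕ) (u : (RCAlg r1 r2)ˣ) :
    u ∈ posNormUnits r1 r2 ↔ 0 < ∏ i, (u : RCAlg r1 r2).1 i := by
  change 0 < Algebra.norm ℝ (u : RCAlg r1 r2) ↔ _
  rw [RCAlg.norm_eq]
  exact mul_pos_iff_of_pos_right
    (Finset.prod_pos fun j _ => Complex.normSq_pos.2 (RCAlg.snd_ne r1 r2 u j))

/-- Build a unit from nonvanishing coordinates. -/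
noncomputable def RCAlg.mkUnit (r1 r2 : ℕ) (x : Fin r1 → ℝ) (y : Fin r2 → ℂ)
    (hx : ∀ i, x i ≠ 0) (hy : ∀ i, y i ≠ 0) : (RCAlg r1 r2)ˣ where
  val := (x, y)
  inv := (fun i => (x i)⁻¹, fun i => (y i)⁻¹)
  val_inv := by ext i <;> simp [hx, hy]
  inv_val := by ext i <;> simp [hx, hy]

theorem RCAlg.isSquare_iff (r1 r2 : ℕ) (u : (RCAlg r1 r2)ˣ) :
    u ∈ (powMonoidHom 2 : (RCAlg r1 r2)ˣ →* (RCAlg r1 r2)ˣ).range ↔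
      ∀ i, 0 < (u : RCAlg r1 r2).1 i := by
  constructor
  · rintro ⟨v, rfl⟩ i
    have := RCAlg.fst_ne r1 r2 v i
    simp only [powMonoidHom_apply, Units.val_pow_eq_pow_val, Prod.pow_fst, Pi.pow_apply]
    positivity
  · intro h
    choose z hz using fun i => IsAlgClosed.exists_pow_nat_eq ((u : RCAlg r1 r2).2 i) (n := 2) two_pos
    refine ⟨RCAlg.mkUnit r1 r2 (fun i => Real.sqrt ((u : RCAlg r1 r2).1 i)) z
      (fun i => (Real.sqrt_pos.2 (h i)).ne') (fun i h0 => ?_), ?_⟩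
    · apply RCAlg.snd_ne r1 r2 u i
      rw [← hz i, h0]
      simp
    · apply Units.ext
      apply Prod.ext
      · funext i
        exact Real.sq_sqrt (h i).le
      · funext i
        exact hz i

/-- Signs of all real coordinates but the first. -/
noncomputable def RCAlg.signs (m r2 : ℕ) :
    (RCAlg (m + 1) r2)ˣ →* (Fin m → SignTypeˣ) :=
  MonoidHom.pi fun i => Units.map
    ((signHom : ℝ →*₀ SignType).toMonoidHom.comp
      ((Pi.evalMonoidHom (fun _ : Fin (m + 1) => ℝ) i.succ).comp
        (MonoidHom.fst (Fin (m + 1) → ℝ) (Fin r2 → ℂ))))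

theorem RCAlg.signs_apply (m r2 : ℕ) (u : (RCAlg (m + 1) r2)ˣ) (i : Fin m) :
    (RCAlg.signs m r2 u i : SignType) = SignType.sign ((u : RCAlg (m + 1) r2).1 i.succ) := rfl

theorem RCAlg.ker_signs (m r2 : ℕ) :
    ((RCAlg.signs m r2).comp (posNormUnits (m + 1) r2).subtype).ker =
      Subgroup.comap (posNormUnits (m + 1) r2).subtype
        (powMonoidHom 2 : (RCAlg (m + 1) r2)ˣ →* (RCAlg (m + 1) r2)ˣ).range := by
  ext ⟨u, hu⟩
  rw [Subgroup.mem_comap, MonoidHom.mem_ker]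
  simp only [MonoidHom.comp_apply, Subgroup.subtype_apply]
  rw [RCAlg.isSquare_iff, Fin.forall_fin_succ]
  rw [RCAlg.norm_pos_iff, Fin.prod_univ_succ] at hu
  have key : RCAlg.signs m r2 u = 1 ↔ ∀ i : Fin m, 0 < (u : RCAlg (m + 1) r2).1 i.succ := by
    rw [funext_iff]
    refine forall_congr' fun i => ?_
    rw [Units.ext_iff, RCAlg.signs_apply, Pi.one_apply, Units.val_one, sign_eq_one_iff]
  rw [key]
  refine ⟨fun h => ⟨?_, h⟩, fun h => h.2⟩
  exact (mul_pos_iff_of_pos_right (Finset.prod_pos fun i _ => h i)).1 hu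

theorem RCAlg.signs_surj (m r2 : ℕ) :
    Function.Surjective ((RCAlg.signs m r2).comp (posNormUnits (m + 1) r2).subtype) := by
  intro s
  have h0 : ∀ i, (((s i : SignType) : ℝ)) ≠ 0 := by
    intro i
    have h := (s i).ne_zero
    generalize (s i : SignType) = t at h
    cases t <;> simp_all
  have hP : (∏ i, ((s i : SignType) : ℝ)) ≠ 0 := Finset.prod_ne_zero_iff.2 fun i _ => h0 i
  let x : Fin (m + 1) → ℝ := Fin.cons (∏ i, ((s i : SignType) : ℝ)) fun i => ((s i : SignType) : ℝ)
  have hx : ∀ i, x i ≠ 0 := by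
    intro i
    refine Fin.cases ?_ (fun j => ?_) i
    · exact hP
    · exact h0 j
  refine ⟨⟨RCAlg.mkUnit (m + 1) r2 x 1 hx (fun _ => one_ne_zero), ?_⟩, ?_⟩
  · rw [RCAlg.norm_pos_iff]
    change 0 < ∏ i, x i
    rw [Fin.prod_univ_succ]
    simp only [x, Fin.cons_zero, Fin.cons_succ]
    exact mul_self_pos.2 hP
  · funext i
    apply Units.ext
    change SignType.sign (((s i : SignType) : ℝ)) = s i
    generalize (s i : SignType) = t
    cases t <;> simp

/-- **Positive-norm units modulo squares in `ℝ^(r1) × ℂ^(r2)`.**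
The quotient of the group `P` of positive-norm units of `R = ℝ^(r1) × ℂ^(r2)` by the
subgroup `Q = {u² : u ∈ R^×}` of squares of units has exactly `2^(r1-1)` elements
(for `r1 ≥ 1`). -/
theorem card_posNormUnits_mod_squares (r1 r2 : ℕ) (hr1 : 1 ≤ r1) :
    Nat.card (posNormUnits r1 r2 ⧸ Subgroup.comap (posNormUnits r1 r2).subtype
        (powMonoidHom 2 : (RCAlg r1 r2)ˣ →* (RCAlg r1 r2)ˣ).range) = 2 ^ (r1 - 1) := by
  obtain ⟨m, rfl⟩ : ∃ m, r1 = m + 1 := ⟨r1 - 1, by omega⟩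
  rw [← RCAlg.ker_signs,
    Nat.card_congr (QuotientGroup.quotientKerEquivOfSurjective _ (RCAlg.signs_surj m r2)).toEquiv,
    Nat.card_eq_fintype_card, Fintype.card_fun, Fintype.card_fin]
  have : Fintype.card SignTypeˣ = 2 := by decide
  rw [this, Nat.add_sub_cancel]
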